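/- Under the stated assumptions (in particular cL < 1, the Lipschitz condition |f(x,r) − f(x,s)| ≤ L sup_{b∈A}|r(b) − s(b)|, the weight condition E[sup_{b∈A} ω(X^{x,a})(b)] ≤ c ω(x)(a) for all (x,a) ∈ 𝕏 × A, and sup_{(y,b)∈𝕏×A} [ω(y)(b)^{-1} E[|f(X^{y,b}, 0)|]] < ∞), there exists a unique function v ∈ 𝒲 which satisfies for all (x,a) ∈ 𝕏 × A that E[|f(X^{x,a}, v(X^{x,a}))|] < ∞ and v(x)(a) = E[f(X^{x,a}, v(X^{x,a}))]. -/

import Mathlib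

/-!
The operator `(T v)(x)(a) = E[f(X^{x,a}, v(X^{x,a}))]` maps the weighted space `𝒲` to itself and is
a `cL`-contraction for the weighted sup-norm: if `|u - v| ≤ C w` pointwise, the Lipschitz condition
gives `|f(y, u(y)) - f(y, v(y))| ≤ L C sup_b w(y)(b)`, and integrating this along `y = X^{x,a}` with
the weight condition yields the bound `L C c w(x)(a)` (`lintegral_diff_le`). Comparing `v` with `0`,
the same estimate shows that `T v` is well defined (`integrable_field`). A Picard iteration starting
at `0` therefore converges pointwise, and the limit stays in `𝒲`, as measurability survives
pointwise limits (`existsUnique_weighted_fixedPoint`).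
-/

open MeasureTheory ProbabilityTheory

/-- Membership in the space `𝒲` of measurable functions bounded by a multiple of the weight `w`. -/
def MemWeighted {S A : Type*} [MeasurableSpace S] (w v : S → A → ℝ) : Prop :=
  Measurable v ∧ ∃ C : ℝ, ∀ x a, |v x a| ≤ C * w x a

/-- The contraction principle on `𝒲`, with the weighted norm expressed by pointwise bounds. -/
lemma existsUnique_weighted_fixedPoint {S A : Type*} [MeasurableSpace S]
    (w : S → A → ℝ) (hw : ∀ x a, 0 < w x a) (q : ℝ) (hq0 : 0 ≤ q) (hq1 : q < 1)
    (T : (S → A → ℝ) → S → A → ℝ)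
    (hT : ∀ v, MemWeighted w v → MemWeighted w (T v))
    (hTq : ∀ u v, MemWeighted w u → MemWeighted w v → ∀ C : ℝ, 0 ≤ C →
      (∀ x a, |u x a - v x a| ≤ C * w x a) → ∀ x a, |T u x a - T v x a| ≤ q * C * w x a) :
    ∃! v : S → A → ℝ, MemWeighted w v ∧ ∀ x a, v x a = T v x a := by
  have hzero : MemWeighted w (0 : S → A → ℝ) :=
    ⟨measurable_const, 0, fun x a => by simp⟩
  have hmem : ∀ n, MemWeighted w (T^[n] 0) := by
    intro n
    induction n with
    | zero => exact hzero
    | succ n ih => rw [Function.iterate_succ_apply']; exact hT _ ih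
  obtain ⟨C₀, hC₀⟩ := (hT 0 hzero).2
  have hstep : ∀ n x a, |T^[n] 0 x a - T^[n+1] 0 x a| ≤ |C₀| * q ^ n * w x a := by
    intro n
    induction n with
    | zero =>
      intro x a
      have h1 : C₀ * w x a ≤ |C₀| * w x a :=
        mul_le_mul_of_nonneg_right (le_abs_self _) (hw x a).le
      simpa using (hC₀ x a).trans h1
    | succ n ih =>
      intro x a
      have h := hTq _ _ (hmem n) (hmem (n+1)) _ (by positivity) ih x a
      rw [← Function.iterate_succ_apply' T, ← Function.iterate_succ_apply' T] at h
      refine h.trans (le_of_eq ?_)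
      ring
  have hdist : ∀ x a n, dist (T^[n] 0 x a) (T^[n+1] 0 x a) ≤ (|C₀| * w x a) * q ^ n := by
    intro x a n
    rw [Real.dist_eq]
    refine (hstep n x a).trans (le_of_eq ?_)
    ring
  have hlim : ∀ x a, ∃ l, Filter.Tendsto (fun n => T^[n] 0 x a) Filter.atTop (nhds l) :=
    fun x a => cauchySeq_tendsto_of_complete (cauchySeq_of_le_geometric q _ hq1 (hdist x a))
  choose v hv using hlim
  have hrate : ∀ n x a, |T^[n] 0 x a - v x a| ≤ (|C₀| * q ^ n / (1 - q)) * w x a := by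
    intro n x a
    have h := dist_le_of_le_geometric_of_tendsto q _ hq1 (hdist x a) (hv x a) n
    rw [Real.dist_eq] at h
    refine h.trans (le_of_eq ?_)
    ring
  have hvmem : MemWeighted w v := by
    refine ⟨?_, |C₀| * q ^ 0 / (1 - q), fun x a => by simpa using hrate 0 x a⟩
    refine measurable_pi_lambda _ fun a => ?_
    exact measurable_of_tendsto_metrizable
      (fun n => (measurable_pi_apply a).comp (hmem n).1) (tendsto_pi_nhds.2 fun x => hv x a)
  have hgeom : ∀ K : ℝ, Filter.Tendsto (fun n : ℕ => K * q ^ n) Filter.atTop (nhds 0) := by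
    intro K
    simpa using (tendsto_pow_atTop_nhds_zero_of_lt_one hq0 hq1).const_mul K
  have hfix : ∀ x a, v x a = T v x a := by
    intro x a
    have hTv : Filter.Tendsto (fun n => T^[n+1] 0 x a) Filter.atTop (nhds (T v x a)) := by
      rw [tendsto_iff_dist_tendsto_zero]
      refine squeeze_zero (fun _ => dist_nonneg) (fun n => ?_)
        (hgeom (q * (|C₀| / (1 - q)) * w x a))
      rw [Real.dist_eq, Function.iterate_succ_apply']
      have h1q : 0 < 1 - q := by linarith
      refine (hTq _ _ (hmem n) hvmem _ (by positivity) (hrate n) x a).trans (le_of_eq ?_)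
      ring
    exact tendsto_nhds_unique ((Filter.tendsto_add_atTop_iff_nat 1).2 (hv x a)) hTv
  refine ⟨v, ⟨hvmem, hfix⟩, ?_⟩
  · rintro u ⟨humem, hu⟩
    obtain ⟨Cu, hCu⟩ := humem.2
    obtain ⟨Cv, hCv⟩ := hvmem.2
    -- Applying the contraction estimate repeatedly improves the constant by the factor `q`.
    have hn : ∀ (n : ℕ) x a, |u x a - v x a| ≤ |Cu + Cv| * q ^ n * w x a := by
      intro n
      induction n with
      | zero =>
        intro x a
        have h1 : (Cu + Cv) * w x a ≤ |Cu + Cv| * w x a :=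
          mul_le_mul_of_nonneg_right (le_abs_self _) (hw x a).le
        have h2 := abs_sub (u x a) (v x a)
        have h3 := hCu x a
        have h4 := hCv x a
        rw [pow_zero, mul_one]
        linarith
      | succ n ih =>
        intro x a
        have h := hTq _ _ humem hvmem _ (by positivity) ih x a
        rw [hu x a, hfix x a]
        refine h.trans (le_of_eq ?_)
        ring
    funext x a
    have h0 : |u x a - v x a| ≤ 0 :=
      ge_of_tendsto' (hgeom (|Cu + Cv| * w x a)) fun n =>
        (hn n x a).trans (le_of_eq (by ring))
    exact sub_eq_zero.1 (abs_nonpos_iff.1 h0)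

section RandomField

variable {S : Type*} {Ω : Type*} [MeasurableSpace Ω] {μ : Measure Ω}
  {A : Type*} {c L : ℝ} {X : S → A → Ω → S} {f : S → (A → ℝ) → ℝ} {w : S → A → ℝ}

lemma measurable_field [MeasurableSpace S]
    (hX : Measurable fun p : S × Ω => fun a : A => X p.1 a p.2)
    (hf : Measurable fun p : S × (A → ℝ) => f p.1 p.2) {v : S → A → ℝ} (hv : Measurable v)
    (a : A) : Measurable fun p : S × Ω => f (X p.1 a p.2) (v (X p.1 a p.2)) := by
  have hXa : Measurable fun p : S × Ω => X p.1 a p.2 := (measurable_pi_apply a).comp hX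
  exact hf.comp (hXa.prodMk (hv.comp hXa))

/-- The contraction estimate, at the level of Lebesgue integrals, so that it needs neither
integrability nor measurability. -/
lemma lintegral_diff_le (hL : 0 ≤ L)
    (hf_lip : ∀ (x : S) (r s : A → ℝ),
      ENNReal.ofReal |f x r - f x s|
        ≤ ENNReal.ofReal L * ⨆ b : A, ENNReal.ofReal |r b - s b|)
    (hw_int : ∀ (x : S) (a : A),
      (∫⁻ ω, (⨆ b : A, ENNReal.ofReal (w (X x a ω) b)) ∂μ) ≤ ENNReal.ofReal (c * w x a))
    {u v : S → A → ℝ} {C : ℝ} (hC : 0 ≤ C) (huv : ∀ x a, |u x a - v x a| ≤ C * w x a)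
    (x : S) (a : A) :
    ∫⁻ ω, ENNReal.ofReal |f (X x a ω) (u (X x a ω)) - f (X x a ω) (v (X x a ω))| ∂μ
      ≤ ENNReal.ofReal (c * L * C * w x a) := by
  have hpt : ∀ y, ENNReal.ofReal |f y (u y) - f y (v y)|
      ≤ ENNReal.ofReal (L * C) * ⨆ b : A, ENNReal.ofReal (w y b) := by
    intro y
    refine (hf_lip y _ _).trans ?_
    rw [ENNReal.ofReal_mul hL, mul_assoc]
    gcongr
    refine iSup_le fun b => ?_
    calc ENNReal.ofReal |u y b - v y b| ≤ ENNReal.ofReal (C * w y b) :=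
          ENNReal.ofReal_le_ofReal (huv y b)
      _ = ENNReal.ofReal C * ENNReal.ofReal (w y b) := ENNReal.ofReal_mul hC
      _ ≤ _ := by
          gcongr
          exact le_iSup (fun b => ENNReal.ofReal (w y b)) b
  calc _ ≤ ∫⁻ ω, ENNReal.ofReal (L * C) * ⨆ b : A, ENNReal.ofReal (w (X x a ω) b) ∂μ :=
        lintegral_mono fun ω => hpt _
    _ = ENNReal.ofReal (L * C) * ∫⁻ ω, ⨆ b : A, ENNReal.ofReal (w (X x a ω) b) ∂μ :=
        lintegral_const_mul' _ _ ENNReal.ofReal_ne_top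
    _ ≤ ENNReal.ofReal (L * C) * ENNReal.ofReal (c * w x a) := by
        gcongr
        exact hw_int x a
    _ = ENNReal.ofReal (c * L * C * w x a) := by
        rw [← ENNReal.ofReal_mul (by positivity)]
        congr 1
        ring

/-- For `v ∈ 𝒲`, the integrand defining `(T v)(x)(a)` is integrable, and `|(T v)(x)(a)|` is
bounded by a multiple of `w(x)(a)`. -/
lemma integrable_field [MeasurableSpace S] (hc : 0 ≤ c) (hL : 0 ≤ L)
    (hX : Measurable fun p : S × Ω => fun a : A => X p.1 a p.2)
    (hf : Measurable fun p : S × (A → ℝ) => f p.1 p.2) (hw_pos : ∀ x a, 0 < w x a)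
    (hf_lip : ∀ (x : S) (r s : A → ℝ),
      ENNReal.ofReal |f x r - f x s|
        ≤ ENNReal.ofReal L * ⨆ b : A, ENNReal.ofReal |r b - s b|)
    (hw_int : ∀ (x : S) (a : A),
      (∫⁻ ω, (⨆ b : A, ENNReal.ofReal (w (X x a ω) b)) ∂μ) ≤ ENNReal.ofReal (c * w x a))
    (hf0 : ∃ C : ℝ, ∀ (x : S) (a : A),
      (∫⁻ ω, ENNReal.ofReal |f (X x a ω) 0| ∂μ) ≤ ENNReal.ofReal (C * w x a))
    {v : S → A → ℝ} (hv : MemWeighted w v) :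
    (∀ x a, Integrable (fun ω => f (X x a ω) (v (X x a ω))) μ) ∧
      ∃ C : ℝ, ∀ x a, |∫ ω, f (X x a ω) (v (X x a ω)) ∂μ| ≤ C * w x a := by
  obtain ⟨C₀, hC₀⟩ := hf0
  obtain ⟨C, hC⟩ := hv.2
  have hm : ∀ x a, Measurable fun ω => f (X x a ω) (v (X x a ω)) := fun x a =>
    (measurable_field hX hf hv.1 a).comp measurable_prodMk_left
  have hm0 : ∀ x a, Measurable fun ω => f (X x a ω) 0 := fun x a =>
    (measurable_field hX hf (v := 0) measurable_const a).comp measurable_prodMk_left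
  have hv0 : ∀ x a, |v x a - (0 : S → A → ℝ) x a| ≤ |C| * w x a := fun x a => by
    simpa using (hC x a).trans (mul_le_mul_of_nonneg_right (le_abs_self C) (hw_pos x a).le)
  have hbound : ∀ x a, ∫⁻ ω, ENNReal.ofReal |f (X x a ω) (v (X x a ω))| ∂μ
      ≤ ENNReal.ofReal ((c * L * |C| + |C₀|) * w x a) := by
    intro x a
    have hwx := (hw_pos x a).le
    calc _ ≤ ∫⁻ ω, (ENNReal.ofReal |f (X x a ω) (v (X x a ω)) - f (X x a ω) 0|
            + ENNReal.ofReal |f (X x a ω) 0|) ∂μ := by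
          refine lintegral_mono fun ω => ?_
          rw [← ENNReal.ofReal_add (abs_nonneg _) (abs_nonneg _)]
          refine ENNReal.ofReal_le_ofReal ?_
          have := abs_add_le (f (X x a ω) (v (X x a ω)) - f (X x a ω) 0) (f (X x a ω) 0)
          rwa [sub_add_cancel] at this
      _ = ∫⁻ ω, ENNReal.ofReal |f (X x a ω) (v (X x a ω)) - f (X x a ω) 0| ∂μ
            + ∫⁻ ω, ENNReal.ofReal |f (X x a ω) 0| ∂μ :=
          lintegral_add_right _ (hm0 x a).abs.ennreal_ofReal
      _ ≤ ENNReal.ofReal (c * L * |C| * w x a) + ENNReal.ofReal (|C₀| * w x a) := by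
          refine add_le_add
            (lintegral_diff_le hL hf_lip hw_int (abs_nonneg C) hv0 x a) ?_
          exact (hC₀ x a).trans
            (ENNReal.ofReal_le_ofReal (mul_le_mul_of_nonneg_right (le_abs_self _) hwx))
      _ = _ := by
          rw [← ENNReal.ofReal_add (by positivity) (by positivity)]
          congr 1
          ring
  refine ⟨fun x a => ⟨(hm x a).aestronglyMeasurable, ?_⟩, c * L * |C| + |C₀|, fun x a => ?_⟩
  · rw [hasFiniteIntegral_iff_norm]
    exact (hbound x a).trans_lt ENNReal.ofReal_lt_top
  · have hwx := (hw_pos x a).le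
    have h := norm_integral_le_lintegral_norm (μ := μ) fun ω => f (X x a ω) (v (X x a ω))
    exact h.trans (ENNReal.toReal_le_of_le_ofReal (by positivity) (hbound x a))

end RandomField

/-- Existence and uniqueness of solutions of functional fixed-point equations driven by a
random field `X = (X^{x,a})` (Corollary 2.3 of the paper).  Under `cL < 1`, the Lipschitz
condition `|f(x,r) − f(x,s)| ≤ L sup_{b∈A}|r(b) − s(b)|`, the weight condition
`E[sup_b ω(X^{x,a})(b)] ≤ c ω(x)(a)`, and
`sup_{(y,b)} [ω(y)(b)⁻¹ E[|f(X^{y,b},0)|]] < ∞`, there is a unique `v ∈ 𝒲` with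
`E[|f(X^{x,a}, v(X^{x,a}))|] < ∞` and `v(x)(a) = E[f(X^{x,a}, v(X^{x,a}))]` for all `x, a`. -/
theorem stmt2
    {𝕏 : Type*} [mX : MeasurableSpace 𝕏] [Nonempty 𝕏]
    {Ω : Type*} [mΩ : MeasurableSpace Ω] (μ : Measure Ω) [IsProbabilityMeasure μ]
    {A : Type*} [Countable A] [Nonempty A]
    (c L : ℝ) (hc : 0 ≤ c) (hL : 0 ≤ L) (hcL : c * L < 1)
    (X : 𝕏 → A → Ω → 𝕏)
    (hX : Measurable fun p : 𝕏 × Ω => fun a : A => X p.1 a p.2)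
    (f : 𝕏 → (A → ℝ) → ℝ)
    (hf : Measurable fun p : 𝕏 × (A → ℝ) => f p.1 p.2)
    (w : 𝕏 → A → ℝ) (hw_pos : ∀ x a, 0 < w x a) (hw_meas : Measurable w)
    (hf_lip : ∀ (x : 𝕏) (r s : A → ℝ),
      ENNReal.ofReal |f x r - f x s|
        ≤ ENNReal.ofReal L * ⨆ b : A, ENNReal.ofReal |r b - s b|)
    (hw_int : ∀ (x : 𝕏) (a : A),
      (∫⁻ ω, (⨆ b : A, ENNReal.ofReal (w (X x a ω) b)) ∂μ) ≤ ENNReal.ofReal (c * w x a))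
    (hf0 : ∃ C : ℝ, ∀ (x : 𝕏) (a : A),
      (∫⁻ ω, ENNReal.ofReal |f (X x a ω) 0| ∂μ) ≤ ENNReal.ofReal (C * w x a)) :
    ∃! v : 𝕏 → A → ℝ,
      (Measurable v ∧ ∃ C : ℝ, ∀ x a, |v x a| ≤ C * w x a) ∧
        ∀ x a, Integrable (fun ω => f (X x a ω) (v (X x a ω))) μ ∧
          v x a = ∫ ω, f (X x a ω) (v (X x a ω)) ∂μ := by
  set T : (𝕏 → A → ℝ) → 𝕏 → A → ℝ := fun v x a => ∫ ω, f (X x a ω) (v (X x a ω)) ∂μ with hTdef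
  have hint : ∀ v, MemWeighted w v → _ := fun v hv =>
    integrable_field (μ := μ) hc hL hX hf hw_pos hf_lip hw_int hf0 hv
  have hT : ∀ v, MemWeighted w v → MemWeighted w (T v) := by
    intro v hv
    refine ⟨measurable_pi_lambda _ fun a => ?_, (hint v hv).2⟩
    exact (measurable_field hX hf hv.1 a).stronglyMeasurable.integral_prod_right'.measurable
  have hTq : ∀ u v, MemWeighted w u → MemWeighted w v → ∀ C : ℝ, 0 ≤ C →
      (∀ x a, |u x a - v x a| ≤ C * w x a) →
        ∀ x a, |T u x a - T v x a| ≤ c * L * C * w x a := by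
    intro u v hu hv C hC huv x a
    have hwx := (hw_pos x a).le
    simp only [hTdef]
    rw [← integral_sub ((hint u hu).1 x a) ((hint v hv).1 x a)]
    refine (norm_integral_le_lintegral_norm
      fun ω => f (X x a ω) (u (X x a ω)) - f (X x a ω) (v (X x a ω))).trans ?_
    exact ENNReal.toReal_le_of_le_ofReal (by positivity)
      (lintegral_diff_le hL hf_lip hw_int hC huv x a)
  obtain ⟨v, ⟨hv, hfix⟩, huniq⟩ := existsUnique_weighted_fixedPoint w hw_pos (c * L)
    (mul_nonneg hc hL) hcL T hT hTq
  exact ⟨v, ⟨hv, fun x a => ⟨(hint v hv).1 x a, hfix x a⟩⟩,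
    fun u hu => huniq u ⟨hu.1, fun x a => (hu.2 x a).2⟩⟩
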